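/- arXiv:2402.00174 — 6 statements merged into one kernel-verified Lean document; each statement's English description precedes it below -/
import Mathlib

section
/- Every Cobounded-algebra A with ⊥ ≠ ⊤ has a unique atom and a unique coatom; specifically, sSup {x ∈ A : x ≠ ⊤} is the unique coatom of A and sInf {x ∈ A : x ≠ ⊥} is the unique atom of A. -/
open scoped Classical

/-- A Cobounded-algebra: a complete distributive lattice in which a supremum equals `⊤`
only if some member of the family equals `⊤`, and an infimum equals `⊥` only if some
member of the family equals `⊥`. -/
structure IsCobounded (α : Type u) [CompleteLattice α] : Prop where
  inf_sup_distrib : ∀ a b c : α, a ⊓ (b ⊔ c) = (a ⊓ b) ⊔ (a ⊓ c)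
  sup_inf_distrib : ∀ a b c : α, a ⊔ (b ⊓ c) = (a ⊔ b) ⊓ (a ⊔ c)
  iSup_eq_top : ∀ {ι : Type u} (f : ι → α), (⨆ i, f i) = ⊤ → ∃ j, f j = ⊤
  iInf_eq_bot : ∀ {ι : Type u} (f : ι → α), (⨅ i, f i) = ⊥ → ∃ j, f j = ⊥

theorem isCoatom_iff_eq_of_isGreatest_ne_top {α : Type*} [PartialOrder α] [OrderTop α] {a c : α}
    (hc : IsGreatest {x : α | x ≠ ⊤} c) : IsCoatom a ↔ a = c := by
  constructor
  · intro ha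
    have hac : a ≤ c := hc.2 ha.1
    exact hac.eq_of_not_lt fun hlt => hc.1 (ha.2 c hlt)
  · rintro rfl
    exact ⟨hc.1, fun b hab => by_contra fun hb => (hc.2 hb).not_gt hab⟩

theorem isAtom_iff_eq_of_isLeast_ne_bot {α : Type*} [PartialOrder α] [OrderBot α] {a c : α}
    (hc : IsLeast {x : α | x ≠ ⊥} c) : IsAtom a ↔ a = c :=
  isCoatom_dual_iff_isAtom.symm.trans (isCoatom_iff_eq_of_isGreatest_ne_top (α := αᵒᵈ) hc.dual)

namespace IsCobounded

variable {α : Type u} [CompleteLattice α] {s : Set α}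

theorem top_mem_of_sSup_eq_top (hA : IsCobounded α) (hs : sSup s = ⊤) : ⊤ ∈ s := by
  rw [sSup_eq_iSup'] at hs
  obtain ⟨x, hx⟩ := hA.iSup_eq_top _ hs
  exact hx ▸ x.2

theorem bot_mem_of_sInf_eq_bot (hA : IsCobounded α) (hs : sInf s = ⊥) : ⊥ ∈ s := by
  rw [sInf_eq_iInf'] at hs
  obtain ⟨x, hx⟩ := hA.iInf_eq_bot _ hs
  exact hx ▸ x.2

end IsCobounded

theorem cobounded_unique_atom_unique_coatom_general {α : Type*} [CompleteLattice α]
    (hSup : ∀ s : Set α, sSup s = ⊤ → ⊤ ∈ s) (hInf : ∀ s : Set α, sInf s = ⊥ → ⊥ ∈ s) :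
    IsCoatom (sSup {x : α | x ≠ ⊤}) ∧
    (∀ c : α, IsCoatom c → c = sSup {x : α | x ≠ ⊤}) ∧
    IsAtom (sInf {x : α | x ≠ ⊥}) ∧
    (∀ a : α, IsAtom a → a = sInf {x : α | x ≠ ⊥}) := by
  -- If the supremum were `⊤`, then `hSup` would put `⊤` into `{x | x ≠ ⊤}`; dually for `hInf`.
  have hGreatest : IsGreatest {x : α | x ≠ ⊤} (sSup {x : α | x ≠ ⊤}) :=
    ⟨fun h => hSup _ h rfl, fun _ => le_sSup⟩
  have hLeast : IsLeast {x : α | x ≠ ⊥} (sInf {x : α | x ≠ ⊥}) :=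
    ⟨fun h => hInf _ h rfl, fun _ => sInf_le⟩
  exact ⟨(isCoatom_iff_eq_of_isGreatest_ne_top hGreatest).2 rfl,
    fun _ => (isCoatom_iff_eq_of_isGreatest_ne_top hGreatest).1,
    (isAtom_iff_eq_of_isLeast_ne_bot hLeast).2 rfl,
    fun _ => (isAtom_iff_eq_of_isLeast_ne_bot hLeast).1⟩

/-- Every nontrivial Cobounded-algebra has a unique atom and a unique coatom:
`sSup {x | x ≠ ⊤}` is the unique coatom and `sInf {x | x ≠ ⊥}` is the unique atom. -/
theorem cobounded_unique_atom_unique_coatom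
    {α : Type u} [CompleteLattice α] (hA : IsCobounded α) (hbt : (⊥ : α) ≠ ⊤) :
    IsCoatom (sSup {x : α | x ≠ ⊤}) ∧
    (∀ c : α, IsCoatom c → c = sSup {x : α | x ≠ ⊤}) ∧
    IsAtom (sInf {x : α | x ≠ ⊥}) ∧
    (∀ a : α, IsAtom a → a = sInf {x : α | x ≠ ⊥}) :=
  cobounded_unique_atom_unique_coatom_general
    (fun _ => hA.top_mem_of_sSup_eq_top) (fun _ => hA.bot_mem_of_sInf_eq_bot)
end

section
/- Let A be a Cobounded-algebra with ⊥ ≠ ⊤ and let D be a designated set of A which is an ultrafilter, i.e., D is maximal among filters of A not containing ⊥. Then A \ D = {⊥}; equivalently, for every a ∈ A, a ∈ D if and only if a ≠ ⊥. -/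
open scoped Classical

/-- A designated set: a filter containing `⊤`, not containing `⊥`, upward closed and
closed under binary meets. -/
structure IsDesignated {α : Type u} [CompleteLattice α] (D : Set α) : Prop where
  top_mem : (⊤ : α) ∈ D
  bot_not_mem : (⊥ : α) ∉ D
  mem_of_le : ∀ x ∈ D, ∀ y : α, x ≤ y → y ∈ D
  inf_mem : ∀ x ∈ D, ∀ y ∈ D, x ⊓ y ∈ D

/-- `D` is an ultrafilter: it is a designated set (a filter avoiding `⊥`) and every
designated set (filter avoiding `⊥`) containing `D` equals `D`. -/
def IsUltraDesignated {α : Type u} [CompleteLattice α] (D : Set α) : Prop :=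
  IsDesignated D ∧ ∀ E : Set α, IsDesignated E → D ⊆ E → E = D

section

variable {α : Type*} [CompleteLattice α] {D : Set α}

theorem IsCobounded.bot_mem_of_sInf_eq_bot_s3 (hA : IsCobounded α) {s : Set α}
    (hs : sInf s = ⊥) : ⊥ ∈ s := by
  obtain ⟨⟨x, hxs⟩, hx⟩ := hA.iInf_eq_bot ((↑) : s → α) (sInf_eq_iInf' s ▸ hs)
  exact hx ▸ hxs

theorem IsCobounded.infPrime_bot (hA : IsCobounded α) (hbt : (⊥ : α) ≠ ⊤) :
    InfPrime (⊥ : α) := by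
  refine ⟨not_isMax_iff_ne_top.mpr hbt, fun x y hxy => ?_⟩
  have bot_mem_pair : ⊥ ∈ ({x, y} : Set α) :=
    hA.bot_mem_of_sInf_eq_bot_s3 (sInf_pair.trans (le_bot_iff.mp hxy))
  exact bot_mem_pair.imp Eq.ge Eq.ge

theorem isDesignated_compl_singleton_bot (h : InfPrime (⊥ : α)) :
    IsDesignated ({⊥}ᶜ : Set α) where
  top_mem := h.ne_top.symm
  bot_not_mem hbot := hbot rfl
  mem_of_le _ hx _ hxy := ne_bot_of_le_ne_bot hx hxy
  inf_mem _ hx _ hy hxy := (h.2 hxy.le).elim (hx ∘ le_bot_iff.mp) (hy ∘ le_bot_iff.mp)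

theorem IsDesignated.subset_compl_singleton_bot (hD : IsDesignated D) :
    D ⊆ {⊥}ᶜ :=
  Set.subset_compl_singleton_iff.mpr hD.bot_not_mem

theorem IsUltraDesignated.eq_compl_singleton_bot (hD : IsUltraDesignated D)
    (h : InfPrime (⊥ : α)) : D = {⊥}ᶜ :=
  (hD.2 _ (isDesignated_compl_singleton_bot h) hD.1.subset_compl_singleton_bot).symm

theorem ultraDesignated_compl_eq_bot_general
    (h : InfPrime (⊥ : α)) (hD : IsUltraDesignated D) :
    {a : α | a ∉ D} = {⊥} ∧ (∀ a : α, a ∈ D ↔ a ≠ ⊥) := by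
  obtain rfl : D = {⊥}ᶜ := hD.eq_compl_singleton_bot h
  exact ⟨compl_compl {⊥}, fun _ => Iff.rfl⟩

end

/-- In an ultra-designated Cobounded-algebra, the complement of the designated set is
exactly `{⊥}`; equivalently, `a ∈ D ↔ a ≠ ⊥`. -/
theorem ultraDesignated_compl_eq_bot
    {α : Type u} [CompleteLattice α] (hA : IsCobounded α) (hbt : (⊥ : α) ≠ ⊤)
    {D : Set α} (hD : IsUltraDesignated D) :
    {a : α | a ∉ D} = {⊥} ∧ (∀ a : α, a ∈ D ↔ a ≠ ⊥) :=
  ultraDesignated_compl_eq_bot_general (hA.infPrime_bot hbt) hD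
end

section
/- For any Cobounded-algebra A with ⊥ ≠ ⊤, the map f_A : A → PS3 is a homomorphism with respect to meet, join, and implication: for all a, b ∈ A, f_A(a ⊓ b) = f_A(a) ⊓ f_A(b), f_A(a ⊔ b) = f_A(a) ⊔ f_A(b), and f_A(a ⇒ b) = f_A(a) ⇒ f_A(b). -/
open scoped Classical

/-- The Cobounded implication: `a ⇒ b = ⊥` if `a ≠ ⊥` and `b = ⊥`, and `⊤` otherwise. -/
noncomputable def cimp {α : Type u} [CompleteLattice α] (a b : α) : α :=
  if a ≠ ⊥ ∧ b = ⊥ then ⊥ else ⊤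

/-- The algebra `PS3` is the three-element chain, realized as `Fin 3`
(`0` is `0`, `1` is `½`, `2` is `1`); meet is `min` and join is `max`. -/
abbrev PS3 : Type := Fin 3

/-- Implication on `PS3`: `p ⇒ q = 0` if `p ≠ 0` and `q = 0`, and `1` (i.e. `2 : Fin 3`)
otherwise. -/
def PS3.imp (p q : PS3) : PS3 := if p ≠ 0 ∧ q = 0 then 0 else 2

/-- The map `f_A : A → PS3` sending `⊤` to `1`, `⊥` to `0` and everything else to `½`. -/
noncomputable def fA {α : Type u} [CompleteLattice α] (a : α) : PS3 :=
  if a = ⊤ then 2 else if a = ⊥ then 0 else 1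

/-!
An element of `PS3` is determined by whether it is `⊥` and whether it is `⊤`, and `fA` reflects
both properties. Compatibility with joins and meets thus reduces to the irreducibility of `⊤` and
`⊥`, which is the coboundedness condition for two-element families.
-/

theorem PS3.eq_of_bot_iff_of_top_iff :
    ∀ {p q : PS3}, (p = ⊥ ↔ q = ⊥) → (p = ⊤ ↔ q = ⊤) → p = q := by
  decide

theorem PS3.imp_eq_ite (p q : PS3) : PS3.imp p q = if p ≠ ⊥ ∧ q = ⊥ then ⊥ else ⊤ :=
  rfl

namespace IsCobounded

variable {α : Type u} [CompleteLattice α]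

theorem dual (hA : IsCobounded α) : IsCobounded αᵒᵈ where
  inf_sup_distrib := hA.sup_inf_distrib
  sup_inf_distrib := hA.inf_sup_distrib
  iSup_eq_top := hA.iInf_eq_bot
  iInf_eq_bot := hA.iSup_eq_top

theorem supIrred_top (hA : IsCobounded α) (hbt : (⊥ : α) ≠ ⊤) : SupIrred (⊤ : α) := by
  refine ⟨fun hmin => hbt hmin.eq_bot.symm, fun a b hab => ?_⟩
  have hsup : ⨆ i : ULift.{u} Bool, cond i.down a b = ⊤ := by
    rw [iSup_ulift, ← sup_eq_iSup, hab]
  obtain ⟨⟨_ | _⟩, hj⟩ := hA.iSup_eq_top _ hsup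
  · exact Or.inr hj
  · exact Or.inl hj

theorem infIrred_bot (hA : IsCobounded α) (hbt : (⊥ : α) ≠ ⊤) : InfIrred (⊥ : α) :=
  supIrred_toDual.mp (hA.dual.supIrred_top hbt.symm)

end IsCobounded

section fA

variable {α : Type u} [CompleteLattice α]

theorem fA_eq_top_iff {a : α} : fA a = ⊤ ↔ a = ⊤ := by
  unfold fA
  split_ifs with htop hbot
  · exact iff_of_true rfl htop
  · exact iff_of_false (by decide) htop
  · exact iff_of_false (by decide) htop

theorem fA_eq_bot_iff (hbt : (⊥ : α) ≠ ⊤) {a : α} : fA a = ⊥ ↔ a = ⊥ := by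
  unfold fA
  split_ifs with htop hbot
  · exact iff_of_false (by decide) (htop.trans_ne hbt.symm)
  · exact iff_of_true rfl hbot
  · exact iff_of_false (by decide) hbot

theorem fA_inf (hbot : InfIrred (⊥ : α)) (a b : α) : fA (a ⊓ b) = fA a ⊓ fA b := by
  have hbt : (⊥ : α) ≠ ⊤ := hbot.ne_top
  have inf_eq_bot : a ⊓ b = ⊥ ↔ a = ⊥ ∨ b = ⊥ :=
    ⟨(hbot.2 ·), by rintro (rfl | rfl) <;> simp⟩
  apply PS3.eq_of_bot_iff_of_top_iff
  · rw [min_eq_bot, fA_eq_bot_iff hbt, fA_eq_bot_iff hbt, fA_eq_bot_iff hbt, inf_eq_bot]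
  · simp only [inf_eq_top_iff, fA_eq_top_iff]

theorem fA_sup (htop : SupIrred (⊤ : α)) (a b : α) : fA (a ⊔ b) = fA a ⊔ fA b := by
  have hbt : (⊥ : α) ≠ ⊤ := htop.ne_bot.symm
  have sup_eq_top : a ⊔ b = ⊤ ↔ a = ⊤ ∨ b = ⊤ :=
    ⟨(htop.2 ·), by rintro (rfl | rfl) <;> simp⟩
  apply PS3.eq_of_bot_iff_of_top_iff
  · simp only [sup_eq_bot_iff, fA_eq_bot_iff hbt]
  · rw [max_eq_top, fA_eq_top_iff, fA_eq_top_iff, fA_eq_top_iff, sup_eq_top]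

theorem fA_cimp (hbt : (⊥ : α) ≠ ⊤) (a b : α) : fA (cimp a b) = PS3.imp (fA a) (fA b) := by
  have fA_bot : fA (⊥ : α) = ⊥ := (fA_eq_bot_iff hbt).mpr rfl
  have fA_top : fA (⊤ : α) = ⊤ := fA_eq_top_iff.mpr rfl
  simp only [PS3.imp_eq_ite, cimp, apply_ite fA, fA_bot, fA_top, ne_eq, fA_eq_bot_iff hbt]

theorem fA_hom_general (htop : SupIrred (⊤ : α)) (hbot : InfIrred (⊥ : α)) :
    (∀ a b : α, fA (a ⊓ b) = fA a ⊓ fA b) ∧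
    (∀ a b : α, fA (a ⊔ b) = fA a ⊔ fA b) ∧
    (∀ a b : α, fA (cimp a b) = PS3.imp (fA a) (fA b)) :=
  ⟨fA_inf hbot, fA_sup htop, fA_cimp hbot.ne_top⟩

end fA

/-- For any nontrivial Cobounded-algebra `A`, the map `f_A : A → PS3` is a homomorphism
with respect to meet, join, and implication. -/
theorem fA_hom {α : Type u} [CompleteLattice α] (hA : IsCobounded α)
    (hbt : (⊥ : α) ≠ ⊤) :
    (∀ a b : α, fA (a ⊓ b) = fA a ⊓ fA b) ∧
    (∀ a b : α, fA (a ⊔ b) = fA a ⊔ fA b) ∧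
    (∀ a b : α, fA (cimp a b) = PS3.imp (fA a) (fA b)) :=
  fA_hom_general (hA.supIrred_top hbt) (hA.infIrred_bot hbt)
end

section
/- For any Cobounded-algebra A with ⊥ ≠ ⊤ and any family (a_i)_{i ∈ I} of elements of A, f_A(⨅_{i∈I} a_i) = ⨅_{i∈I} f_A(a_i) and f_A(⨆_{i∈I} a_i) = ⨆_{i∈I} f_A(a_i); that is, f_A preserves arbitrary infima and suprema. -/
open scoped Classical

/-!
An element of a three-element chain is determined by its comparisons with the elements of the chain.
In any complete lattice `⨅ i, a i` is `⊤` exactly when every `a i` is, which settles the comparison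
of both sides with `1`; the comparison with `½` needs `⨅ i, a i ≠ ⊥` exactly when every `a i ≠ ⊥`,
and this is coboundedness. Suprema are dual.
-/

section

variable {α : Type*} [CompleteLattice α] {x : α}

theorem two_le_fA_iff : 2 ≤ fA x ↔ x = ⊤ := by
  unfold fA
  split_ifs with htop <;> simp [htop]

theorem fA_le_one_iff : fA x ≤ 1 ↔ x ≠ ⊤ := by
  unfold fA
  split_ifs with htop <;> simp [htop]

theorem fA_le_zero_iff [Nontrivial α] : fA x ≤ 0 ↔ x = ⊥ := by
  unfold fA
  split_ifs <;> simp [*]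

theorem one_le_fA_iff [Nontrivial α] : 1 ≤ fA x ↔ x ≠ ⊥ := by
  unfold fA
  split_ifs <;> simp [*]

variable {ι : Sort*} {a : ι → α}

theorem fA_iInf [Nontrivial α] (hbot : ⨅ i, a i = ⊥ → ∃ i, a i = ⊥) :
    fA (⨅ i, a i) = ⨅ i, fA (a i) := by
  have iInf_ne_bot_iff : ⨅ i, a i ≠ ⊥ ↔ ∀ i, a i ≠ ⊥ :=
    ⟨fun h i hi => h (eq_bot_mono (iInf_le a i) hi), fun h hinf => (hbot hinf).elim h⟩
  refine eq_of_forall_le_iff fun c => ?_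
  rw [le_iInf_iff]
  match c with
  | 0 => simp only [Fin.zero_le, implies_true]
  | 1 => simpa only [one_le_fA_iff] using iInf_ne_bot_iff
  | 2 => simpa only [two_le_fA_iff] using iInf_eq_top

theorem fA_iSup [Nontrivial α] (htop : ⨆ i, a i = ⊤ → ∃ i, a i = ⊤) :
    fA (⨆ i, a i) = ⨆ i, fA (a i) := by
  have iSup_ne_top_iff : ⨆ i, a i ≠ ⊤ ↔ ∀ i, a i ≠ ⊤ :=
    ⟨fun h i hi => h (eq_top_mono (le_iSup a i) hi), fun h hsup => (htop hsup).elim h⟩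
  refine eq_of_forall_ge_iff fun c => ?_
  rw [iSup_le_iff]
  match c with
  | 0 => simpa only [fA_le_zero_iff] using iSup_eq_bot
  | 1 => simpa only [fA_le_one_iff] using iSup_ne_top_iff
  | 2 => simp only [show ∀ p : PS3, p ≤ 2 from Fin.le_last, implies_true]

theorem fA_preserves_iInf_iSup_general [Nontrivial α]
    (hbot : ⨅ i, a i = ⊥ → ∃ i, a i = ⊥) (htop : ⨆ i, a i = ⊤ → ∃ i, a i = ⊤) :
    fA (⨅ i, a i) = ⨅ i, fA (a i) ∧ fA (⨆ i, a i) = ⨆ i, fA (a i) :=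
  ⟨fA_iInf hbot, fA_iSup htop⟩

end

/-- For any nontrivial Cobounded-algebra `A`, the map `f_A : A → PS3` preserves
arbitrary infima and suprema of families. -/
theorem fA_preserves_iInf_iSup {α : Type u} [CompleteLattice α] (hA : IsCobounded α)
    (hbt : (⊥ : α) ≠ ⊤) {ι : Type u} (a : ι → α) :
    fA (⨅ i, a i) = ⨅ i, fA (a i) ∧ fA (⨆ i, a i) = ⨆ i, fA (a i) := by
  have : Nontrivial α := nontrivial_of_ne _ _ hbt
  exact fA_preserves_iInf_iSup_general (hA.iInf_eq_bot a) (hA.iSup_eq_top a)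
end

section
/- Let (A, D) be a designated Cobounded-algebra with ⊥ ≠ ⊤ whose designated set D contains at least two elements, and let c = sSup {x ∈ A : x ≠ ⊤} be the unique coatom of A. Then c ∈ D, c ≠ ⊤, and c* = c; consequently both c and c* belong to D. -/
open scoped Classical

/-- The negation `*` of a designated Cobounded-algebra `(A, D)`: `a* = ⊥` if `a = ⊤`,
`a* = a` if `a ∈ D` and `a ≠ ⊤`, and `a* = ⊤` if `a ∉ D`. -/
noncomputable def dstar {α : Type u} [CompleteLattice α] (D : Set α) (a : α) : α :=
  if a = ⊤ then ⊥ else if a ∈ D then a else ⊤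

theorem IsCobounded.top_mem_of_sSup_eq_top_s9 {α : Type u} [CompleteLattice α]
    (hA : IsCobounded α) {s : Set α} (hs : sSup s = ⊤) : ⊤ ∈ s := by
  rw [sSup_eq_iSup'] at hs
  obtain ⟨⟨x, hx⟩, rfl⟩ := hA.iSup_eq_top _ hs
  exact hx

theorem IsDesignated.isUpperSet {α : Type u} [CompleteLattice α] {D : Set α}
    (hD : IsDesignated D) : IsUpperSet D :=
  fun x y hxy hx => hD.mem_of_le x hx y hxy

theorem dstar_of_mem_of_ne_top {α : Type u} [CompleteLattice α] {D : Set α} {a : α}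
    (haD : a ∈ D) (ha : a ≠ ⊤) : dstar D a = a := by
  rw [dstar, if_neg ha, if_pos haD]

theorem mem_of_mem_upperBounds_ne_top {α : Type u} [LE α] [Top α] {D : Set α} {c : α}
    (hD : IsUpperSet D) (hDnt : D.Nontrivial) (hc : c ∈ upperBounds {x : α | x ≠ ⊤}) :
    c ∈ D := by
  obtain ⟨x, hxD, hx⟩ := hDnt.exists_ne ⊤
  exact hD (hc hx) hxD

theorem coatom_mem_designated_and_star_fixed_general
    {α : Type u} [CompleteLattice α] (htop : ∀ s : Set α, sSup s = ⊤ → ⊤ ∈ s)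
    {D : Set α} (hD : IsUpperSet D) (hDnt : D.Nontrivial) :
    sSup {x : α | x ≠ ⊤} ∈ D ∧
    sSup {x : α | x ≠ ⊤} ≠ ⊤ ∧
    dstar D (sSup {x : α | x ≠ ⊤}) = sSup {x : α | x ≠ ⊤} ∧
    dstar D (sSup {x : α | x ≠ ⊤}) ∈ D := by
  have hmem : sSup {x : α | x ≠ ⊤} ∈ D :=
    mem_of_mem_upperBounds_ne_top hD hDnt fun _ => le_sSup
  have hne : sSup {x : α | x ≠ ⊤} ≠ ⊤ := fun h => htop _ h rfl
  have hstar : dstar D (sSup {x : α | x ≠ ⊤}) = sSup {x : α | x ≠ ⊤} :=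
    dstar_of_mem_of_ne_top hmem hne
  exact ⟨hmem, hne, hstar, hstar.symm ▸ hmem⟩

/-- In a nontrivial designated Cobounded-algebra `(A, D)` whose designated set has at
least two elements, the unique coatom `c = sSup {x | x ≠ ⊤}` satisfies `c ∈ D`,
`c ≠ ⊤` and `c* = c`; consequently both `c` and `c*` belong to `D`. -/
theorem coatom_mem_designated_and_star_fixed
    {α : Type u} [CompleteLattice α] (hA : IsCobounded α) (hbt : (⊥ : α) ≠ ⊤)
    {D : Set α} (hD : IsDesignated D) (htwo : ∃ x ∈ D, ∃ y ∈ D, x ≠ y) :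
    sSup {x : α | x ≠ ⊤} ∈ D ∧
    sSup {x : α | x ≠ ⊤} ≠ ⊤ ∧
    dstar D (sSup {x : α | x ≠ ⊤}) = sSup {x : α | x ≠ ⊤} ∧
    dstar D (sSup {x : α | x ≠ ⊤}) ∈ D :=
  coatom_mem_designated_and_star_fixed_general (fun _ => hA.top_mem_of_sSup_eq_top_s9)
    hD.isUpperSet htwo
end

section
/- Let B be a complete Boolean algebra and let A be the lattice obtained from B by adjoining a new bottom element and then a new top element (i.e., A = WithTop (WithBot B)). Then A is a complete distributive lattice satisfying both Cobounded-algebra conditions: for every family (a_i) of elements of A, ⨆ a_i = ⊤ implies a_j = ⊤ for some j, and ⨅ a_i = ⊥ implies a_j = ⊥ for some j. Hence A, equipped with the Cobounded implication and the negation determined by any designated set, is a designated Cobounded-algebra. -/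
open scoped Classical

section CompleteLattice

variable {α : Type*} [CompleteLattice α] {ι : Sort*} {f : ι → α} {c : α}

theorem exists_eq_top_of_iSup_eq_top (hc : ∀ x, x ≤ c ↔ x ≠ ⊤) (hf : ⨆ i, f i = ⊤) :
    ∃ i, f i = ⊤ := by
  by_contra! hne
  have hle : ⨆ i, f i ≤ c := iSup_le fun i => (hc (f i)).2 (hne i)
  exact (hc _).1 hle hf

theorem exists_eq_bot_of_iInf_eq_bot (hc : ∀ x, c ≤ x ↔ x ≠ ⊥) (hf : ⨅ i, f i = ⊥) :
    ∃ i, f i = ⊥ :=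
  exists_eq_top_of_iSup_eq_top (α := αᵒᵈ) hc hf

end CompleteLattice

theorem withTop_le_coe_top_iff_ne_top {α : Type*} [LE α] [OrderTop α] (x : WithTop α) :
    x ≤ ((⊤ : α) : WithTop α) ↔ x ≠ ⊤ := by
  cases x <;> simp

theorem withTop_withBot_coe_bot_le_iff_ne_bot {α : Type*} [LE α] [OrderBot α]
    (x : WithTop (WithBot α)) :
    (((⊥ : α) : WithBot α) : WithTop (WithBot α)) ≤ x ↔ x ≠ ⊥ := by
  cases x with
  | top => simp [← WithTop.coe_bot]
  | coe y => cases y <;> simp [← WithTop.coe_bot]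

theorem withTop_withBot_boolean_isCobounded_general {L : Type*} [CompleteLattice L]
    (inf_sup_le : ∀ a b c : L, a ⊓ (b ⊔ c) ≤ (a ⊓ b) ⊔ (a ⊓ c)) :
    IsCobounded (WithTop (WithBot L)) := by
  let _ : DistribLattice L := .ofInfSupLe inf_sup_le
  exact
    { inf_sup_distrib := inf_sup_left
      sup_inf_distrib := sup_inf_left
      iSup_eq_top := fun _ => exists_eq_top_of_iSup_eq_top withTop_le_coe_top_iff_ne_top
      iInf_eq_bot := fun _ => exists_eq_bot_of_iInf_eq_bot withTop_withBot_coe_bot_le_iff_ne_bot }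

/-- Adjoining a new bottom and a new top element to a complete Boolean algebra yields a
complete distributive lattice satisfying both Cobounded-algebra conditions; hence it is
a (designated) Cobounded-algebra. -/
theorem withTop_withBot_boolean_isCobounded
    {B : Type u} [CompleteBooleanAlgebra B] :
    (∀ a b c : WithTop (WithBot B), a ⊓ (b ⊔ c) = (a ⊓ b) ⊔ (a ⊓ c)) ∧
    (∀ a b c : WithTop (WithBot B), a ⊔ (b ⊓ c) = (a ⊔ b) ⊓ (a ⊔ c)) ∧
    (∀ {ι : Type u} (f : ι → WithTop (WithBot B)), (⨆ i, f i) = ⊤ → ∃ j, f j = ⊤) ∧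
    (∀ {ι : Type u} (f : ι → WithTop (WithBot B)), (⨅ i, f i) = ⊥ → ∃ j, f j = ⊥) ∧
    IsCobounded (WithTop (WithBot B)) := by
  have h := withTop_withBot_boolean_isCobounded_general fun a b c : B => (inf_sup_left a b c).le
  exact ⟨h.inf_sup_distrib, h.sup_inf_distrib, h.iSup_eq_top, h.iInf_eq_bot, h⟩
end
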